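/- arXiv:1707.05764 — 2 statements merged into one kernel-verified Lean document; each statement's English description precedes it below -/
import Mathlib

section
/- For every p ∈ (1,∞) and all d1, d2 ∈ ℤ, Dist_{W^{1/p,p}}(E_{d1}, E_{d2}) ≤ σ_p(d2 − d1); that is, for every f ∈ E_{d1} and every ε > 0 there exists g ∈ E_{d2} with |f − g|_{W^{1/p,p}}^p ≤ σ_p^p(d2 − d1) + ε. -/
open MeasureTheory Filter
open scoped ENNReal

noncomputable section

/-- Arc-length measure on the unit circle, realized as a measure on ℂ:
the pushforward of Lebesgue measure on `[0, 2π)` under `θ ↦ exp (θ i)`. -/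
def circleMeasure : Measure ℂ :=
  Measure.map (fun θ : ℝ => Complex.exp (θ * Complex.I))
    (volume.restrict (Set.Ico 0 (2 * Real.pi)))

/-- The unit circle `S¹ ⊆ ℂ`. -/
def unitCircle : Set ℂ := Metric.sphere (0 : ℂ) 1

/-- Gagliardo `p`-energy of `f` over a subset `A ⊆ S¹ × S¹`. -/
def gEnergyOn (p : ℝ) (f : ℂ → ℂ) (A : Set (ℂ × ℂ)) : ℝ≥0∞ :=
  ∫⁻ q in A, ENNReal.ofReal (‖f q.1 - f q.2‖ ^ p / ‖q.1 - q.2‖ ^ 2)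
    ∂(circleMeasure.prod circleMeasure)

/-- Total Gagliardo `p`-energy `|f|_{W^{1/p,p}}^p` (as an extended real). -/
def gEnergy (p : ℝ) (f : ℂ → ℂ) : ℝ≥0∞ := gEnergyOn p f Set.univ

/-- The Gagliardo seminorm `|f|_{W^{1/p,p}}`. -/
def gSeminorm (p : ℝ) (f : ℂ → ℂ) : ℝ := (gEnergy p f).toReal ^ (1 / p)

/-- A continuous map `g : S¹ → S¹` has (winding) degree `d`: it lifts to a
continuous `φ : [0, 2π] → ℝ` with `g (e^{iθ}) = e^{iφ(θ)}` and
`φ(2π) - φ(0) = 2πd`. -/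
def HasDegree (g : ℂ → ℂ) (d : ℤ) : Prop :=
  ContinuousOn g unitCircle ∧ (∀ z ∈ unitCircle, g z ∈ unitCircle) ∧
    ∃ φ : ℝ → ℝ, ContinuousOn φ (Set.Icc 0 (2 * Real.pi)) ∧
      (∀ θ ∈ Set.Icc 0 (2 * Real.pi),
        g (Complex.exp (θ * Complex.I)) = Complex.exp (φ θ * Complex.I)) ∧
      φ (2 * Real.pi) - φ 0 = 2 * Real.pi * d

/-- The class `𝓔_d ⊆ W^{1/p,p}(S¹;S¹)` of maps of (VMO-) degree `d`:
maps with values in `S¹` a.e., finite Gagliardo energy, approximable by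
continuous degree-`d` circle maps of finite energy both in `L^p` and in the
Gagliardo seminorm. -/
def classE (p : ℝ) (d : ℤ) : Set (ℂ → ℂ) :=
  {f | AEMeasurable f circleMeasure ∧ (∀ᵐ x ∂circleMeasure, ‖f x‖ = 1) ∧
    gEnergy p f ≠ ⊤ ∧
    ∃ g : ℕ → ℂ → ℂ,
      (∀ k, HasDegree (g k) d ∧ gEnergy p (g k) ≠ ⊤) ∧
      Tendsto (fun k => ∫ x, ‖f x - g k x‖ ^ p ∂circleMeasure) atTop (nhds 0) ∧
      Tendsto (fun k => gSeminorm p (fun x => f x - g k x)) atTop (nhds 0)}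

/-- `σ_p(d)`: the minimal `W^{1/p,p}`-seminorm in the class `𝓔_d`. -/
def sigmaP (p : ℝ) (d : ℤ) : ℝ := sInf (gSeminorm p '' classE p d)

/-- `Dist_{W^{1/p,p}}(𝓔_{d₁}, 𝓔_{d₂}) = sup_{f ∈ 𝓔_{d₁}} inf_{g ∈ 𝓔_{d₂}} |f - g|_{W^{1/p,p}}`. -/
def DistW (p : ℝ) (d1 d2 : ℤ) : ℝ :=
  sSup ((fun f => sInf ((fun g => gSeminorm p (fun x => f x - g x)) '' classE p d2))
    '' classE p d1)

end

/-!
For `0 < a` let `M_a` be the Möbius map of the circle fixing `±1` that the Cayley transform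
conjugates to the dilation `s ↦ a s` of the line. The Cayley transform carries the measure
`dσ(x) dσ(y) / |x - y|²` to `ds dt / (s - t)²`, which is invariant under dilations, so
`h ∘ M_a` has the same Gagliardo seminorm as `h`; it also has the same degree. As `a → ∞`, `M_a`
tends to `1` at every point other than `-1`.

Given `f` of degree `d₁`, take a continuous nearly minimal `h` of degree `d₂ - d₁` with `h 1 = 1`
and put `g = f · (h ∘ M_a)`, which has degree `d₂`. In
`f - g = f · (1 - h ∘ M_a)` the Leibniz rule leaves two terms: one has seminorm at most that of
`1 - h ∘ M_a`, hence of `h`, and the other carries the factor `1 - h ∘ M_a → 0` against the finite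
energy of `f`, so it vanishes in the limit by dominated convergence.
-/

open scoped Topology Real ComplexConjugate

/-! ### Measures and `L^r` seminorms -/

lemma map_withDensity_comp {α β : Type*} [MeasurableSpace α] [MeasurableSpace β] {μ : Measure α}
    {e : α → β} (he : Measurable e) {k : β → ℝ≥0∞} (hk : Measurable k) :
    (μ.withDensity (k ∘ e)).map e = (μ.map e).withDensity k := by
  ext s hs
  rw [Measure.map_apply he hs, withDensity_apply _ (he hs), withDensity_apply _ hs,
    setLIntegral_map hs hk he]
  rfl

lemma tendsto_eLpNorm_zero_of_dominated {α ι E : Type*} [MeasurableSpace α] [NormedAddCommGroup E]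
    {μ : Measure α} {l : Filter ι} [l.IsCountablyGenerated] {r : ℝ≥0∞} (hr : r ≠ ⊤)
    {F : ι → α → E} {b : α → ℝ} (hF : ∀ᶠ i in l, AEStronglyMeasurable (F i) μ)
    (hb : eLpNorm b r μ ≠ ⊤) (hFb : ∀ᶠ i in l, ∀ᵐ x ∂μ, ‖F i x‖ ≤ b x)
    (hlim : ∀ᵐ x ∂μ, Tendsto (F · x) l (𝓝 0)) :
    Tendsto (fun i ↦ eLpNorm (F i) r μ) l (𝓝 0) := by
  rcases eq_or_ne r 0 with rfl | hr0
  · simp [tendsto_const_nhds]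
  have hr' : 0 < r.toReal := ENNReal.toReal_pos hr0 hr
  simp only [eLpNorm_eq_lintegral_rpow_enorm_toReal hr0 hr]
  suffices Tendsto (fun i ↦ ∫⁻ x, ‖F i x‖ₑ ^ r.toReal ∂μ) l (𝓝 (∫⁻ _, 0 ∂μ)) by
    simpa [hr'] using this.ennrpow_const (1 / r.toReal)
  refine tendsto_lintegral_filter_of_dominated_convergence' (fun x ↦ ‖b x‖ₑ ^ r.toReal)
    (hF.mono fun i hi ↦ hi.enorm.pow_const _) (hFb.mono fun i hi ↦ ?_) ?_ ?_
  · filter_upwards [hi] with x hx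
    gcongr
    exact enorm_le_iff_norm_le.2 (hx.trans (Real.le_norm_self _))
  · exact (lintegral_rpow_enorm_lt_top_of_eLpNorm_lt_top hr0 hr hb.lt_top).ne
  · filter_upwards [hlim] with x hx
    simpa [hr'] using hx.enorm.ennrpow_const r.toReal

lemma tendsto_eLpNorm_zero_of_tendsto_integral_norm_rpow {α ι E : Type*} [MeasurableSpace α]
    [NormedAddCommGroup E] {μ : Measure α} {l : Filter ι} {p : ℝ} (hp : 0 < p) {F : ι → α → E}
    (hF : ∀ i, MemLp (F i) (ENNReal.ofReal p) μ)
    (hlim : Tendsto (fun i ↦ ∫ x, ‖F i x‖ ^ p ∂μ) l (𝓝 0)) :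
    Tendsto (fun i ↦ eLpNorm (F i) (ENNReal.ofReal p) μ) l (𝓝 0) := by
  have heq (i : ι) : eLpNorm (F i) (ENNReal.ofReal p) μ =
      ENNReal.ofReal ((∫ x, ‖F i x‖ ^ p ∂μ) ^ p⁻¹) := by
    rw [(hF i).eLpNorm_eq_integral_rpow_norm (by simpa) ENNReal.ofReal_ne_top,
      ENNReal.toReal_ofReal hp.le]
  simp only [heq]
  simpa [hp.ne'] using
    ENNReal.tendsto_ofReal (hlim.rpow_const (p := p⁻¹) (Or.inr (inv_nonneg.2 hp.le)))

lemma tendsto_integral_norm_rpow_zero {α ι E : Type*} [MeasurableSpace α]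
    [NormedAddCommGroup E] {μ : Measure α} [IsFiniteMeasure μ] {l : Filter ι}
    [l.IsCountablyGenerated] {p : ℝ} (hp : 0 < p) {F : ι → α → E}
    (hF : ∀ i, AEStronglyMeasurable (F i) μ) {C : ℝ} (hFC : ∀ i, ∀ᵐ x ∂μ, ‖F i x‖ ≤ C)
    (hlim : ∀ᵐ x ∂μ, Tendsto (F · x) l (𝓝 0)) :
    Tendsto (fun i ↦ ∫ x, ‖F i x‖ ^ p ∂μ) l (𝓝 0) := by
  have hbound (i : ι) : ∀ᵐ x ∂μ, ‖‖F i x‖ ^ p‖ ≤ C ^ p := by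
    filter_upwards [hFC i] with x hx
    rw [Real.norm_of_nonneg (by positivity)]
    gcongr
  have hlim' : ∀ᵐ x ∂μ, Tendsto (fun i ↦ ‖F i x‖ ^ p) l (𝓝 0) := by
    filter_upwards [hlim] with x hx
    simpa [hp.ne'] using hx.norm.rpow_const (p := p) (Or.inr hp.le)
  simpa using tendsto_integral_filter_of_dominated_convergence (fun _ ↦ C ^ p)
    (Eventually.of_forall fun i ↦ ((hF i).norm.aemeasurable.pow_const p).aestronglyMeasurable)
    (Eventually.of_forall hbound) (integrable_const _) hlim'

lemma norm_sub_le_two {E : Type*} [SeminormedAddCommGroup E] {z w : E} (hz : ‖z‖ = 1)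
    (hw : ‖w‖ = 1) : ‖z - w‖ ≤ 2 :=
  (norm_sub_le_of_le hz.le hw.le).trans_eq one_add_one_eq_two

/-! ### Arguments of complex numbers -/

lemma exp_two_mul_arg_mul_I {z : ℂ} (hz : z ≠ 0) :
    Complex.exp ((2 * z.arg : ℝ) * Complex.I) = z / conj z := by
  have hexp : Complex.exp ((2 * z.arg : ℝ) * Complex.I) = Complex.exp (z.arg * Complex.I) ^ 2 := by
    rw [← Complex.exp_nat_mul]
    push_cast
    ring_nf
  rw [hexp, eq_div_iff ((map_ne_zero _).2 hz)]
  apply mul_right_cancel₀ hz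
  calc Complex.exp (z.arg * Complex.I) ^ 2 * conj z * z
      = (‖z‖ * Complex.exp (z.arg * Complex.I)) ^ 2 := by
        rw [mul_assoc, Complex.conj_mul']
        ring
    _ = z * z := by rw [Complex.norm_mul_exp_arg_mul_I, sq]

lemma continuousOn_arg_im_nonneg : ContinuousOn Complex.arg {z | 0 ≤ z.im ∧ z ≠ 0} := by
  rintro z ⟨-, hz⟩
  by_cases hslit : z ∈ Complex.slitPlane
  · exact (Complex.continuousAt_arg hslit).continuousWithinAt
  · rw [Complex.mem_slitPlane_iff, not_or, not_lt, not_not] at hslit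
    have hre : z.re ≠ 0 := fun hre ↦ hz (Complex.ext hre hslit.2)
    exact (Complex.continuousWithinAt_arg_of_re_neg_of_im_zero
      (hslit.1.lt_of_ne hre) hslit.2).mono fun w hw ↦ hw.1

/-! ### The circle and its Cayley parametrization -/

instance : IsFiniteMeasure circleMeasure := by
  unfold circleMeasure; infer_instance

lemma mem_unitCircle {z : ℂ} : z ∈ unitCircle ↔ ‖z‖ = 1 := mem_sphere_zero_iff_norm

lemma exp_ofReal_mul_I_mem_unitCircle (θ : ℝ) : Complex.exp (θ * Complex.I) ∈ unitCircle :=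
  mem_unitCircle.2 (Complex.norm_exp_ofReal_mul_I θ)

lemma exists_exp_ofReal_mul_I_eq {z : ℂ} (hz : z ∈ unitCircle) :
    ∃ θ : ℝ, Complex.exp (θ * Complex.I) = z :=
  ⟨z.arg, by simpa [mem_unitCircle.1 hz] using Complex.norm_mul_exp_arg_mul_I z⟩

lemma ae_mem_unitCircle : ∀ᵐ x ∂circleMeasure, x ∈ unitCircle :=
  (ae_map_iff (by fun_prop) Metric.isClosed_sphere.measurableSet).2
    (Eventually.of_forall exp_ofReal_mul_I_mem_unitCircle)

lemma map_mul_left_circleMeasure {w : ℂ} (hw : w ∈ unitCircle) :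
    circleMeasure.map (w * ·) = circleMeasure := by
  have : Fact (0 < 2 * π) := ⟨Real.two_pi_pos⟩
  have hT : Measurable fun x : AddCircle (2 * π) ↦ (x.toCircle : ℂ) := by
    exact (continuous_subtype_val.comp AddCircle.continuous_toCircle).measurable
  have hσ : circleMeasure = Measure.map (fun x : AddCircle (2 * π) ↦ (x.toCircle : ℂ)) volume := by
    rw [← (AddCircle.measurePreserving_mk (2 * π) 0).map_eq,
      Measure.map_map hT AddCircle.measurable_mk', zero_add, circleMeasure,
      Measure.restrict_congr_set Ico_ae_eq_Ioc]
    congr 1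
    ext θ
    simp [AddCircle.toCircle_apply_mk, Circle.coe_exp, Real.pi_ne_zero]
  obtain ⟨α, rfl⟩ := exists_exp_ofReal_mul_I_eq hw
  have hrot : (Complex.exp (α * Complex.I) * ·) ∘ (fun x : AddCircle (2 * π) ↦ (x.toCircle : ℂ))
      = (fun x : AddCircle (2 * π) ↦ (x.toCircle : ℂ)) ∘ ((α : AddCircle (2 * π)) + ·) := by
    ext x
    simp [AddCircle.toCircle_add, AddCircle.toCircle_apply_mk, Circle.coe_exp, Real.pi_ne_zero]
  rw [hσ, Measure.map_map (by fun_prop) hT, hrot, ← Measure.map_map hT (by fun_prop),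
    map_add_left_eq_self]

/-- The Cayley parametrization `ℝ → S¹ ∖ {1}` of the circle. -/
noncomputable def cayley (s : ℝ) : ℂ := (s - Complex.I) / (s + Complex.I)

lemma ofReal_add_I_ne_zero (s : ℝ) : (s + Complex.I : ℂ) ≠ 0 := fun h ↦ by
  simpa using congrArg Complex.im h

lemma cayley_eq_exp (s : ℝ) :
    cayley s = Complex.exp ((π + 2 * Real.arctan s : ℝ) * Complex.I) := by
  have hsin : Real.sin (Real.arctan s) = s * Real.cos (Real.arctan s) := by
    rw [Real.sin_arctan, Real.cos_arctan, mul_one_div]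
  have hcos : (Real.cos (Real.arctan s) : ℂ) ^ 2 * (1 + (s : ℂ) ^ 2) = 1 := by
    exact_mod_cast (by rw [Real.cos_sq_arctan, one_div_mul_cancel (by positivity)] :
      Real.cos (Real.arctan s) ^ 2 * (1 + s ^ 2) = 1)
  have hexp : Complex.exp ((π + 2 * Real.arctan s : ℝ) * Complex.I)
      = -(Real.cos (Real.arctan s) * (1 + s * Complex.I)) ^ 2 := by
    have hsplit : ((π + 2 * Real.arctan s : ℝ) * Complex.I : ℂ)
        = π * Complex.I + (2 : ℕ) * (Real.arctan s * Complex.I) := by push_cast; ring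
    rw [hsplit, Complex.exp_add, Complex.exp_pi_mul_I, Complex.exp_nat_mul, Complex.exp_mul_I,
      ← Complex.ofReal_cos, ← Complex.ofReal_sin, hsin]
    push_cast
    ring
  rw [hexp, cayley, div_eq_iff (ofReal_add_I_ne_zero s)]
  linear_combination (-(s - Complex.I)) * hcos +
    Real.cos (Real.arctan s) ^ 2 * (2 * s + s ^ 3 + Complex.I * s ^ 2) * Complex.I_sq

lemma continuous_cayley : Continuous cayley := by
  unfold cayley
  exact Continuous.div (by fun_prop) (by fun_prop) ofReal_add_I_ne_zero

lemma sq_norm_ofReal_add_I (s : ℝ) : ‖(s + Complex.I : ℂ)‖ ^ 2 = 1 + s ^ 2 := by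
  simpa [Complex.normSq_eq_norm_sq, add_comm] using Complex.normSq_add_mul_I s 1

lemma sq_norm_cayley_sub (s t : ℝ) :
    ‖cayley s - cayley t‖ ^ 2 = 4 * (s - t) ^ 2 / ((1 + s ^ 2) * (1 + t ^ 2)) := by
  have hsub : cayley s - cayley t
      = 2 * Complex.I * (s - t : ℝ) / ((s + Complex.I) * (t + Complex.I)) := by
    have hs := ofReal_add_I_ne_zero s
    have ht := ofReal_add_I_ne_zero t
    unfold cayley
    field_simp
    push_cast
    ring
  simp only [hsub, norm_div, norm_mul, div_pow, mul_pow, sq_norm_ofReal_add_I, Complex.norm_real,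
    Complex.norm_I, Complex.norm_ofNat, Real.norm_eq_abs, sq_abs]
  norm_num

lemma sq_norm_cayley_sub_one (s : ℝ) : ‖cayley s - 1‖ ^ 2 = 4 / (1 + s ^ 2) := by
  have hsub : cayley s - 1 = -2 * Complex.I / (s + Complex.I) := by
    have hs := ofReal_add_I_ne_zero s
    unfold cayley
    field_simp
    ring
  rw [hsub, norm_div, div_pow, sq_norm_ofReal_add_I]
  norm_num

lemma cayley_injective : Function.Injective cayley := by
  intro s t hst
  have h := sq_norm_cayley_sub s t
  rw [hst, sub_self, norm_zero, zero_pow two_ne_zero, eq_comm, div_eq_zero_iff] at h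
  have hden : (1 + s ^ 2) * (1 + t ^ 2) ≠ 0 := by positivity
  simpa [hden, sub_eq_zero] using h

lemma measurableEmbedding_cayley : MeasurableEmbedding cayley :=
  continuous_cayley.measurableEmbedding cayley_injective

lemma image_pi_add_two_mul_arctan :
    (fun s ↦ π + 2 * Real.arctan s) '' Set.univ = Set.Ioo 0 (2 * π) := by
  ext x
  constructor
  · rintro ⟨s, -, rfl⟩
    have hlow := Real.neg_pi_div_two_lt_arctan s
    have hhigh := Real.arctan_lt_pi_div_two s
    constructor <;> dsimp only <;> linarith
  · rintro ⟨hlow, hhigh⟩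
    refine ⟨Real.tan ((x - π) / 2), trivial, ?_⟩
    dsimp only
    rw [Real.arctan_tan (by linarith) (by linarith)]
    ring

lemma circleMeasure_eq_map_cayley : circleMeasure =
    Measure.map cayley (volume.withDensity fun s ↦ ENNReal.ofReal (2 / (1 + s ^ 2))) := by
  set T : ℝ → ℝ := fun s ↦ π + 2 * Real.arctan s with hT
  have hderiv (s : ℝ) : HasDerivAt T (2 / (1 + s ^ 2)) s := by
    simpa [hT, div_eq_mul_inv] using ((Real.hasDerivAt_arctan s).const_mul 2).const_add π
  have hinj : T.Injective := fun s t hst ↦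
    Real.arctan_injective (by simp only [hT] at hst; linarith)
  have hmap := map_withDensity_abs_det_fderiv_eq_addHaar (μ := volume) (f := T)
    MeasurableSet.univ.nullMeasurableSet
    (fun s _ ↦ (hderiv s).hasFDerivAt.hasFDerivWithinAt) hinj.injOn
  have hdens (s : ℝ) : |2 / (1 + s ^ 2)| = 2 / (1 + s ^ 2) := abs_of_pos (by positivity)
  simp only [ContinuousLinearMap.det_toSpanSingleton, hdens, Measure.restrict_univ,
    hT, image_pi_add_two_mul_arctan] at hmap
  have hTm : Measurable T := measurable_const.add (Real.measurable_arctan.const_mul 2)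
  rw [circleMeasure, Measure.restrict_congr_set Ioo_ae_eq_Ico.symm, ← hmap,
    Measure.map_map (by fun_prop) hTm]
  congr 1
  ext s
  exact (cayley_eq_exp s).symm

instance : NullSingletonClass circleMeasure where
  measure_singleton z := by
    rw [circleMeasure_eq_map_cayley, measurableEmbedding_cayley.map_apply]
    exact withDensity_absolutelyContinuous _ _
      ((Set.subsingleton_singleton.preimage cayley_injective).measure_zero _)

/-! ### Dilations of the circle -/

/-- The measure `dσ(x) dσ(y) / |x - y|²` on pairs of points of the circle: the Gagliardo
`p`-energy of `f` is the `p`-th power of the `L^p` norm of `f x - f y` for this measure. -/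
noncomputable def pairMeasure : Measure (ℂ × ℂ) :=
  (circleMeasure.prod circleMeasure).withDensity fun q ↦ ENNReal.ofReal (1 / ‖q.1 - q.2‖ ^ 2)

/-- The measure `ds dt / (s - t)²` on pairs of points of the line, which `cayley` transports to
`pairMeasure`. -/
noncomputable def linePairMeasure : Measure (ℝ × ℝ) :=
  volume.withDensity fun q ↦ ENNReal.ofReal (1 / (q.1 - q.2) ^ 2)

lemma pairMeasure_eq_map_cayley :
    pairMeasure = linePairMeasure.map (Prod.map cayley cayley) := by
  have hρ : Measurable fun s : ℝ ↦ ENNReal.ofReal (2 / (1 + s ^ 2)) := by fun_prop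
  have hc := measurableEmbedding_cayley.measurable
  have hk : Measurable fun q : ℂ × ℂ ↦ ENNReal.ofReal (1 / ‖q.1 - q.2‖ ^ 2) := by fun_prop
  rw [pairMeasure, circleMeasure_eq_map_cayley, Measure.map_prod_map _ _ hc hc,
    ← map_withDensity_comp (hc.prodMap hc) hk, prod_withDensity hρ hρ,
    ← withDensity_mul _ (by fun_prop) (hk.comp (hc.prodMap hc)), linePairMeasure,
    Measure.volume_eq_prod]
  congr 2
  ext ⟨s, t⟩
  simp only [Pi.mul_apply, Function.comp_apply, Prod.map]
  rw [← ENNReal.ofReal_mul (by positivity), ← ENNReal.ofReal_mul (by positivity),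
    sq_norm_cayley_sub]
  congr 1
  rcases eq_or_ne (s - t) 0 with h | h
  · simp [h]
  · field_simp
    norm_num

lemma map_mul_linePairMeasure {a : ℝ} (ha : a ≠ 0) :
    linePairMeasure.map (Prod.map (a * ·) (a * ·)) = linePairMeasure := by
  have hD : Measurable (Prod.map (a * ·) (a * ·) : ℝ × ℝ → ℝ × ℝ) := by fun_prop
  have hk : Measurable fun q : ℝ × ℝ ↦ ENNReal.ofReal (1 / (q.1 - q.2) ^ 2) := by fun_prop
  have hscale : (fun q : ℝ × ℝ ↦ ENNReal.ofReal (1 / (q.1 - q.2) ^ 2)) =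
      ENNReal.ofReal (a ^ 2) •
        ((fun q : ℝ × ℝ ↦ ENNReal.ofReal (1 / (q.1 - q.2) ^ 2)) ∘ Prod.map (a * ·) (a * ·)) := by
    ext q
    simp only [Pi.smul_apply, Function.comp_apply, Prod.map, smul_eq_mul]
    rw [← ENNReal.ofReal_mul (by positivity), ← mul_sub]
    congr 1
    rw [mul_pow]
    field_simp
  have hvol : (volume : Measure (ℝ × ℝ)).map (Prod.map (a * ·) (a * ·)) =
      ENNReal.ofReal ((a ^ 2)⁻¹) • volume := by
    rw [Measure.volume_eq_prod, ← Measure.map_prod_map _ _ (by fun_prop) (by fun_prop),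
      Real.map_volume_mul_left ha, Measure.prod_smul_left, Measure.prod_smul_right, smul_smul,
      ← ENNReal.ofReal_mul (abs_nonneg _), abs_mul_abs_self, ← sq, inv_pow]
  rw [linePairMeasure]
  conv_lhs => rw [hscale]
  rw [withDensity_smul _ (hk.comp hD), Measure.map_smul, map_withDensity_comp hD hk, hvol,
    withDensity_smul_measure, smul_smul, ← ENNReal.ofReal_mul (by positivity),
    mul_inv_cancel₀ (pow_ne_zero 2 ha), ENNReal.ofReal_one, one_smul]

/-- The Möbius map of the circle fixing `1` and `-1` which `cayley` conjugates to the dilation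
`s ↦ a * s` of the line. -/
noncomputable def circleDilation (a : ℝ) (z : ℂ) : ℂ :=
  ((a + 1) * z + (a - 1)) / ((a - 1) * z + (a + 1))

@[fun_prop]
lemma measurable_circleDilation (a : ℝ) : Measurable (circleDilation a) := by
  unfold circleDilation
  fun_prop

lemma circleDilation_cayley (a s : ℝ) : circleDilation a (cayley s) = cayley (a * s) := by
  have hs := ofReal_add_I_ne_zero s
  have hnum : (a + 1) * cayley s + (a - 1)
      = 2 * ((a * s : ℝ) - Complex.I) / (s + Complex.I) := by
    unfold cayley
    field_simp
    push_cast
    ring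
  have hden : (a - 1) * cayley s + (a + 1)
      = 2 * ((a * s : ℝ) + Complex.I) / (s + Complex.I) := by
    unfold cayley
    field_simp
    push_cast
    ring
  rw [circleDilation, hnum, hden, div_div_div_cancel_right₀ hs,
    mul_div_mul_left _ _ two_ne_zero, cayley]

lemma measurePreserving_circleDilation {a : ℝ} (ha : a ≠ 0) :
    MeasurePreserving (Prod.map (circleDilation a) (circleDilation a)) pairMeasure pairMeasure := by
  have hc := measurableEmbedding_cayley.measurable
  refine ⟨by fun_prop, ?_⟩
  have hconj : Prod.map (circleDilation a) (circleDilation a) ∘ Prod.map cayley cayley =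
      Prod.map cayley cayley ∘ Prod.map (a * ·) (a * ·) := by
    ext q <;> simp [circleDilation_cayley]
  rw [pairMeasure_eq_map_cayley, Measure.map_map (by fun_prop) (hc.prodMap hc), hconj,
    ← Measure.map_map (hc.prodMap hc) (by fun_prop), map_mul_linePairMeasure ha]

/-- The point of the closed upper half plane whose argument is half that of
`circleDilation a (exp (θ * I))`, for `0 < a` and `θ ∈ [0, 2π]`. -/
noncomputable def halfAnglePoint (a θ : ℝ) : ℂ :=
  a * Real.cos (θ / 2) + Real.sin (θ / 2) * Complex.I

lemma halfAnglePoint_ne_zero {a : ℝ} (ha : a ≠ 0) (θ : ℝ) : halfAnglePoint a θ ≠ 0 := by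
  intro h
  have hre : Real.cos (θ / 2) = 0 := by
    simpa [halfAnglePoint, ha, ← Complex.ofReal_cos, ← Complex.ofReal_sin]
      using congrArg Complex.re h
  have him : Real.sin (θ / 2) = 0 := by
    simpa [halfAnglePoint, ← Complex.ofReal_cos, ← Complex.ofReal_sin] using congrArg Complex.im h
  simpa [hre, him] using Real.sin_sq_add_cos_sq (θ / 2)

lemma circleDilation_exp {a : ℝ} (ha : a ≠ 0) (θ : ℝ) :
    circleDilation a (Complex.exp (θ * Complex.I)) =
      Complex.exp ((2 * (halfAnglePoint a θ).arg : ℝ) * Complex.I) := by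
  have hu : Complex.exp (θ * Complex.I) = Complex.exp ((θ / 2 : ℝ) * Complex.I) ^ 2 := by
    rw [← Complex.exp_nat_mul]
    push_cast
    ring_nf
  have hcs : Complex.sin (θ / 2 : ℝ) ^ 2 + Complex.cos (θ / 2 : ℝ) ^ 2 = 1 :=
    Complex.sin_sq_add_cos_sq _
  have hnum : (a + 1) * Complex.exp (θ * Complex.I) + (a - 1) =
      2 * Complex.exp ((θ / 2 : ℝ) * Complex.I) * halfAnglePoint a θ := by
    rw [hu, Complex.exp_mul_I, halfAnglePoint, Complex.ofReal_cos, Complex.ofReal_sin]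
    linear_combination (1 - a) * hcs + (a - 1) * Complex.sin (θ / 2 : ℝ) ^ 2 * Complex.I_sq
  have hden : (a - 1) * Complex.exp (θ * Complex.I) + (a + 1) =
      2 * Complex.exp ((θ / 2 : ℝ) * Complex.I) * conj (halfAnglePoint a θ) := by
    rw [hu, Complex.exp_mul_I, halfAnglePoint]
    simp only [map_add, map_mul, Complex.conj_ofReal, Complex.conj_I]
    rw [Complex.ofReal_cos, Complex.ofReal_sin]
    linear_combination (-a - 1) * hcs + (a + 1) * Complex.sin (θ / 2 : ℝ) ^ 2 * Complex.I_sq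
  rw [circleDilation, hnum, hden, mul_div_mul_left _ _ (by simp [Complex.exp_ne_zero]),
    exp_two_mul_arg_mul_I (halfAnglePoint_ne_zero ha θ)]

lemma circleDilation_mem_unitCircle {a : ℝ} (ha : a ≠ 0) {z : ℂ} (hz : z ∈ unitCircle) :
    circleDilation a z ∈ unitCircle := by
  obtain ⟨θ, rfl⟩ := exists_exp_ofReal_mul_I_eq hz
  rw [circleDilation_exp ha]
  exact exp_ofReal_mul_I_mem_unitCircle _

lemma continuousOn_circleDilation {a : ℝ} (ha : a ≠ 0) :
    ContinuousOn (circleDilation a) unitCircle := by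
  unfold circleDilation
  refine ContinuousOn.div (by fun_prop) (by fun_prop) fun z hz h ↦ ha ?_
  have hnorm : ‖((a - 1 : ℝ) : ℂ) * z‖ = ‖((-(a + 1) : ℝ) : ℂ)‖ := by
    congr 1
    push_cast
    linear_combination h
  rw [norm_mul, mem_unitCircle.1 hz, mul_one, Complex.norm_real, Complex.norm_real, norm_neg,
    Real.norm_eq_abs, Real.norm_eq_abs, ← sq_eq_sq_iff_abs_eq_abs] at hnorm
  linarith

lemma tendsto_circleDilation_atTop {z : ℂ} (hz : z ≠ -1) :
    Tendsto (fun a ↦ circleDilation a z) atTop (𝓝 1) := by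
  have hz' : z + 1 ≠ 0 := fun h ↦ hz (eq_neg_of_add_eq_zero_left h)
  have hinv : Tendsto (fun a : ℝ ↦ ((a⁻¹ : ℝ) : ℂ)) atTop (𝓝 0) := by
    exact_mod_cast (Complex.continuous_ofReal.tendsto 0).comp tendsto_inv_atTop_zero
  have hlim : Tendsto (fun a : ℝ ↦ (z + 1 + ((a⁻¹ : ℝ) : ℂ) * (z - 1)) /
      (z + 1 - ((a⁻¹ : ℝ) : ℂ) * (z - 1))) atTop (𝓝 1) := by
    simpa [hz', Pi.div_def] using ((hinv.mul_const (z - 1)).const_add (z + 1)).div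
      ((hinv.mul_const (z - 1)).const_sub (z + 1)) (by simpa using hz')
  refine hlim.congr' ?_
  filter_upwards [eventually_ne_atTop 0] with a ha
  have ha' : (a : ℂ) ≠ 0 := Complex.ofReal_ne_zero.2 ha
  rw [circleDilation, ← mul_div_mul_left _ _ ha']
  push_cast
  congr 1 <;> field_simp <;> ring

lemma halfAnglePoint_im (a θ : ℝ) : (halfAnglePoint a θ).im = Real.sin (θ / 2) := by
  rw [halfAnglePoint, ← Complex.ofReal_mul]
  simp [-Complex.ofReal_mul, -Complex.ofReal_cos, -Complex.ofReal_sin]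

lemma halfAnglePoint_im_nonneg (a : ℝ) {θ : ℝ} (hθ : θ ∈ Set.Icc 0 (2 * π)) :
    0 ≤ (halfAnglePoint a θ).im :=
  halfAnglePoint_im a θ ▸ Real.sin_nonneg_of_nonneg_of_le_pi (by linarith [hθ.1])
    (by linarith [hθ.2])

lemma continuousOn_arg_halfAnglePoint {a : ℝ} (ha : a ≠ 0) :
    ContinuousOn (fun θ ↦ (halfAnglePoint a θ).arg) (Set.Icc 0 (2 * π)) :=
  continuousOn_arg_im_nonneg.comp (by unfold halfAnglePoint; fun_prop) fun θ hθ ↦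
    ⟨halfAnglePoint_im_nonneg a hθ, halfAnglePoint_ne_zero ha θ⟩

lemma two_mul_arg_halfAnglePoint_mem_Icc (a : ℝ) {θ : ℝ} (hθ : θ ∈ Set.Icc 0 (2 * π)) :
    2 * (halfAnglePoint a θ).arg ∈ Set.Icc 0 (2 * π) := by
  have h0 := Complex.arg_nonneg_iff.2 (halfAnglePoint_im_nonneg a hθ)
  have hπ := Complex.arg_le_pi (halfAnglePoint a θ)
  constructor <;> linarith

lemma arg_halfAnglePoint_zero {a : ℝ} (ha : 0 ≤ a) : (halfAnglePoint a 0).arg = 0 := by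
  simp [halfAnglePoint, Complex.arg_ofReal_of_nonneg ha]

lemma arg_halfAnglePoint_two_pi {a : ℝ} (ha : 0 < a) : (halfAnglePoint a (2 * π)).arg = π := by
  rw [Complex.arg_eq_pi_iff]
  simp [halfAnglePoint, ha]

/-! ### Maps of given degree -/

lemma HasDegree.ae_norm_eq_one {g : ℂ → ℂ} {d : ℤ} (hg : HasDegree g d) :
    ∀ᵐ x ∂circleMeasure, ‖g x‖ = 1 :=
  ae_mem_unitCircle.mono fun x hx ↦ mem_unitCircle.1 (hg.2.1 x hx)

lemma HasDegree.aemeasurable {g : ℂ → ℂ} {d : ℤ} (hg : HasDegree g d) :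
    AEMeasurable g circleMeasure := by
  rw [← Measure.restrict_eq_self_of_ae_mem ae_mem_unitCircle]
  exact hg.1.aemeasurable Metric.isClosed_sphere.measurableSet

lemma hasDegree_const {c : ℂ} (hc : c ∈ unitCircle) : HasDegree (fun _ ↦ c) 0 := by
  obtain ⟨t, rfl⟩ := exists_exp_ofReal_mul_I_eq hc
  exact ⟨continuousOn_const, fun _ _ ↦ hc, fun _ ↦ t, continuousOn_const, fun _ _ ↦ rfl, by simp⟩

lemma hasDegree_id : HasDegree (fun z ↦ z) 1 :=
  ⟨continuousOn_id, fun _ ↦ id, id, continuousOn_id, fun _ _ ↦ rfl, by simp⟩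

lemma hasDegree_conj : HasDegree (fun z ↦ conj z) (-1) := by
  refine ⟨Complex.continuous_conj.continuousOn, fun z hz ↦ ?_, Neg.neg, continuousOn_neg,
    fun θ _ ↦ ?_, by simp⟩
  · rwa [mem_unitCircle, RCLike.norm_conj, ← mem_unitCircle]
  · simp [← Complex.exp_conj]

lemma HasDegree.mul {g h : ℂ → ℂ} {d e : ℤ} (hg : HasDegree g d) (hh : HasDegree h e) :
    HasDegree (fun z ↦ g z * h z) (d + e) := by
  obtain ⟨hgc, hgm, φ, hφc, hφ, hφd⟩ := hg
  obtain ⟨hhc, hhm, χ, hχc, hχ, hχe⟩ := hh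
  refine ⟨hgc.mul hhc, fun z hz ↦ ?_, fun θ ↦ φ θ + χ θ, hφc.add hχc, fun θ hθ ↦ ?_, ?_⟩
  · rw [mem_unitCircle, norm_mul, mem_unitCircle.1 (hgm z hz), mem_unitCircle.1 (hhm z hz), one_mul]
  · dsimp only
    rw [hφ θ hθ, hχ θ hθ, ← Complex.exp_add]
    push_cast
    ring_nf
  · push_cast
    linear_combination hφd + hχe

lemma HasDegree.comp_circleDilation {g : ℂ → ℂ} {d : ℤ} (hg : HasDegree g d) {a : ℝ}
    (ha : 0 < a) : HasDegree (fun z ↦ g (circleDilation a z)) d := by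
  obtain ⟨hgc, hgm, φ, hφc, hφ, hφd⟩ := hg
  refine ⟨hgc.comp (continuousOn_circleDilation ha.ne')
      fun _ ↦ circleDilation_mem_unitCircle ha.ne',
    fun z hz ↦ hgm _ (circleDilation_mem_unitCircle ha.ne' hz),
    fun θ ↦ φ (2 * (halfAnglePoint a θ).arg), ?_, fun θ hθ ↦ ?_, ?_⟩
  · exact hφc.comp (continuousOn_const.mul (continuousOn_arg_halfAnglePoint ha.ne'))
      fun θ ↦ two_mul_arg_halfAnglePoint_mem_Icc a
  · dsimp only
    rw [circleDilation_exp ha.ne', hφ _ (two_mul_arg_halfAnglePoint_mem_Icc a hθ)]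
  · simpa [arg_halfAnglePoint_zero ha.le, arg_halfAnglePoint_two_pi ha] using hφd

/-! ### The Gagliardo seminorm -/

lemma pairMeasure_absolutelyContinuous : pairMeasure ≪ circleMeasure.prod circleMeasure :=
  withDensity_absolutelyContinuous _ _

lemma ae_pairMeasure_fst {P : ℂ → Prop} (h : ∀ᵐ x ∂circleMeasure, P x) :
    ∀ᵐ q ∂pairMeasure, P q.1 :=
  pairMeasure_absolutelyContinuous.ae_le (Measure.quasiMeasurePreserving_fst.ae h)

lemma ae_pairMeasure_snd {P : ℂ → Prop} (h : ∀ᵐ x ∂circleMeasure, P x) :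
    ∀ᵐ q ∂pairMeasure, P q.2 :=
  pairMeasure_absolutelyContinuous.ae_le (Measure.quasiMeasurePreserving_snd.ae h)

/-- The Gagliardo seminorm of `f` with exponent `r`, as an `L^r` seminorm of the difference
`f x - f y`; see `gSeminorm_eq_toReal` for the agreement with `gSeminorm`. -/
noncomputable def gagliardoENorm (r : ℝ≥0∞) (f : ℂ → ℂ) : ℝ≥0∞ :=
  eLpNorm (fun q : ℂ × ℂ ↦ f q.1 - f q.2) r pairMeasure

lemma gEnergy_eq_lintegral_pairMeasure {p : ℝ} (hp : 0 ≤ p) (f : ℂ → ℂ) :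
    gEnergy p f = ∫⁻ q, ‖f q.1 - f q.2‖ₑ ^ p ∂pairMeasure := by
  rw [pairMeasure, lintegral_withDensity_eq_lintegral_mul_non_measurable _ (by fun_prop)
    (by simp), gEnergy, gEnergyOn, Measure.restrict_univ]
  congr 1 with q
  rw [Pi.mul_apply, ← ofReal_norm, ENNReal.ofReal_rpow_of_nonneg (norm_nonneg _) hp,
    ← ENNReal.ofReal_mul (by positivity), one_div_mul_eq_div]

lemma gagliardoENorm_ofReal {p : ℝ} (hp : 0 < p) (f : ℂ → ℂ) :
    gagliardoENorm (ENNReal.ofReal p) f = gEnergy p f ^ (1 / p) := by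
  rw [gagliardoENorm, eLpNorm_eq_lintegral_rpow_enorm_toReal (by simpa) ENNReal.ofReal_ne_top,
    ENNReal.toReal_ofReal hp.le, gEnergy_eq_lintegral_pairMeasure hp.le]

lemma gSeminorm_eq_toReal {p : ℝ} (hp : 0 < p) (f : ℂ → ℂ) :
    gSeminorm p f = (gagliardoENorm (ENNReal.ofReal p) f).toReal := by
  rw [gagliardoENorm_ofReal hp, ← ENNReal.toReal_rpow, gSeminorm]

lemma gagliardoENorm_ofReal_ne_top_iff {p : ℝ} (hp : 0 < p) {f : ℂ → ℂ} :
    gagliardoENorm (ENNReal.ofReal p) f ≠ ⊤ ↔ gEnergy p f ≠ ⊤ := by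
  rw [gagliardoENorm_ofReal hp, Ne, ENNReal.rpow_eq_top_iff_of_pos (by positivity)]

lemma gSeminorm_lt_iff {p : ℝ} (hp : 0 < p) {f : ℂ → ℂ} {c : ℝ}
    (hf : gagliardoENorm (ENNReal.ofReal p) f ≠ ⊤) :
    gSeminorm p f < c ↔ gagliardoENorm (ENNReal.ofReal p) f < ENNReal.ofReal c := by
  rw [gSeminorm_eq_toReal hp, ENNReal.lt_ofReal_iff_toReal_lt hf]

lemma gSeminorm_nonneg (p : ℝ) (f : ℂ → ℂ) : 0 ≤ gSeminorm p f :=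
  Real.rpow_nonneg ENNReal.toReal_nonneg _

section GagliardoENorm

variable {r : ℝ≥0∞} {u v : ℂ → ℂ}

lemma aestronglyMeasurable_fst_sub_snd (hu : AEMeasurable u circleMeasure) :
    AEStronglyMeasurable (fun q : ℂ × ℂ ↦ u q.1 - u q.2) pairMeasure :=
  ((hu.comp_fst.sub hu.comp_snd).mono_ac pairMeasure_absolutelyContinuous).aestronglyMeasurable

lemma gagliardoENorm_sub_comm (u v : ℂ → ℂ) :
    gagliardoENorm r (fun z ↦ u z - v z) = gagliardoENorm r (fun z ↦ v z - u z) :=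
  eLpNorm_congr_norm_ae (Eventually.of_forall fun q ↦ by
    rw [← norm_neg]
    congr 1
    ring)

lemma gagliardoENorm_sub_le (hu : AEMeasurable u circleMeasure)
    (hv : AEMeasurable v circleMeasure) (hr : 1 ≤ r) :
    gagliardoENorm r (fun z ↦ u z - v z) ≤ gagliardoENorm r u + gagliardoENorm r v := by
  refine le_trans (le_of_eq ?_) (eLpNorm_sub_le (aestronglyMeasurable_fst_sub_snd hu)
    (aestronglyMeasurable_fst_sub_snd hv) hr)
  unfold gagliardoENorm
  congr 1 with q
  simp only [Pi.sub_apply]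
  ring

lemma gagliardoENorm_le_add_sub (hu : AEMeasurable u circleMeasure)
    (hv : AEMeasurable v circleMeasure) (hr : 1 ≤ r) :
    gagliardoENorm r u ≤ gagliardoENorm r v + gagliardoENorm r (fun z ↦ v z - u z) := by
  simpa using gagliardoENorm_sub_le (v := fun z ↦ v z - u z) hv (hv.sub hu) hr

lemma gagliardoENorm_const_sub (c : ℂ) (u : ℂ → ℂ) :
    gagliardoENorm r (fun z ↦ c - u z) = gagliardoENorm r u :=
  eLpNorm_congr_norm_ae (Eventually.of_forall fun q ↦ by
    rw [sub_sub_sub_cancel_left, norm_sub_rev])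

lemma gagliardoENorm_mul_const (u : ℂ → ℂ) {c : ℂ} (hc : c ∈ unitCircle) :
    gagliardoENorm r (fun z ↦ u z * c) = gagliardoENorm r u :=
  eLpNorm_congr_norm_ae (Eventually.of_forall fun q ↦ by
    rw [← sub_mul, norm_mul, mem_unitCircle.1 hc, mul_one])

lemma gagliardoENorm_conj (u : ℂ → ℂ) :
    gagliardoENorm r (fun z ↦ conj (u z)) = gagliardoENorm r u :=
  eLpNorm_congr_norm_ae (Eventually.of_forall fun q ↦ by rw [← map_sub, RCLike.norm_conj])

lemma gagliardoENorm_comp_circleDilation (hu : AEMeasurable u circleMeasure) {a : ℝ}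
    (ha : a ≠ 0) : gagliardoENorm r (fun z ↦ u (circleDilation a z)) = gagliardoENorm r u := by
  rw [gagliardoENorm, gagliardoENorm, ← eLpNorm_comp_measurePreserving
    (aestronglyMeasurable_fst_sub_snd hu) (measurePreserving_circleDilation ha)]
  rfl

lemma gagliardoENorm_mul_le (hu : AEMeasurable u circleMeasure) (hv : AEMeasurable v circleMeasure)
    (hr : 1 ≤ r) {C : ℝ} (huC : ∀ᵐ x ∂circleMeasure, ‖u x‖ ≤ C) :
    gagliardoENorm r (fun z ↦ u z * v z) ≤ ENNReal.ofReal C * gagliardoENorm r v +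
      eLpNorm (fun q ↦ v q.2 * (u q.1 - u q.2)) r pairMeasure := by
  have hu₁ : AEMeasurable (fun q : ℂ × ℂ ↦ u q.1) pairMeasure :=
    hu.comp_fst.mono_ac pairMeasure_absolutelyContinuous
  have hv₂ : AEMeasurable (fun q : ℂ × ℂ ↦ v q.2) pairMeasure :=
    hv.comp_snd.mono_ac pairMeasure_absolutelyContinuous
  have hleibniz : (fun q : ℂ × ℂ ↦ u q.1 * v q.1 - u q.2 * v q.2) =
      (fun q ↦ u q.1 * (v q.1 - v q.2)) + fun q ↦ v q.2 * (u q.1 - u q.2) := by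
    ext q
    simp only [Pi.add_apply]
    ring
  rw [gagliardoENorm, hleibniz]
  refine (eLpNorm_add_le (hu₁.aestronglyMeasurable.mul (aestronglyMeasurable_fst_sub_snd hv))
    (hv₂.aestronglyMeasurable.mul (aestronglyMeasurable_fst_sub_snd hu)) hr).trans
    (add_le_add_left ?_ _)
  refine eLpNorm_le_mul_eLpNorm_of_ae_le_mul ?_ r
  filter_upwards [ae_pairMeasure_fst huC] with q hq
  simp only [Pi.mul_apply, norm_mul]
  gcongr

lemma gagliardoENorm_mul_ne_top (hu : AEMeasurable u circleMeasure)
    (hv : AEMeasurable v circleMeasure) (hr : 1 ≤ r) {C D : ℝ}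
    (huC : ∀ᵐ x ∂circleMeasure, ‖u x‖ ≤ C) (hvD : ∀ᵐ x ∂circleMeasure, ‖v x‖ ≤ D)
    (hur : gagliardoENorm r u ≠ ⊤) (hvr : gagliardoENorm r v ≠ ⊤) :
    gagliardoENorm r (fun z ↦ u z * v z) ≠ ⊤ := by
  have hsnd : eLpNorm (fun q ↦ v q.2 * (u q.1 - u q.2)) r pairMeasure ≤
      ENNReal.ofReal D * gagliardoENorm r u := by
    refine eLpNorm_le_mul_eLpNorm_of_ae_le_mul ?_ r
    filter_upwards [ae_pairMeasure_snd hvD] with q hq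
    rw [norm_mul]
    gcongr
  exact ne_top_of_le_ne_top (by finiteness)
    ((gagliardoENorm_mul_le hu hv hr huC).trans (add_le_add_right hsnd _))

lemma tendsto_eLpNorm_snd_mul_sub {ι : Type*} {l : Filter ι} [l.IsCountablyGenerated]
    {w : ι → ℂ → ℂ} (hr : r ≠ ⊤) (hu : AEMeasurable u circleMeasure)
    (hur : gagliardoENorm r u ≠ ⊤) (hw : ∀ᶠ i in l, AEMeasurable (w i) circleMeasure) {D : ℝ}
    (hwD : ∀ᶠ i in l, ∀ᵐ x ∂circleMeasure, ‖w i x‖ ≤ D)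
    (hlim : ∀ᵐ x ∂circleMeasure, Tendsto (w · x) l (𝓝 0)) :
    Tendsto (fun i ↦ eLpNorm (fun q ↦ w i q.2 * (u q.1 - u q.2)) r pairMeasure) l (𝓝 0) := by
  refine tendsto_eLpNorm_zero_of_dominated hr (b := fun q ↦ D * ‖u q.1 - u q.2‖) ?_ ?_ ?_ ?_
  · filter_upwards [hw] with i hi
    exact (hi.comp_snd.mono_ac pairMeasure_absolutelyContinuous).aestronglyMeasurable.mul
      (aestronglyMeasurable_fst_sub_snd hu)
  · exact ne_top_of_le_ne_top (ENNReal.mul_ne_top ENNReal.ofReal_ne_top hur)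
      (eLpNorm_le_mul_eLpNorm_of_ae_le_mul (c := |D|) (Eventually.of_forall fun q ↦ by simp) r)
  · filter_upwards [hwD] with i hi
    filter_upwards [ae_pairMeasure_snd hi] with q hq
    rw [norm_mul]
    gcongr
  · filter_upwards [ae_pairMeasure_snd hlim] with q hq
    simpa using hq.mul_const (u q.1 - u q.2)

end GagliardoENorm

lemma weighted_norm_one_sub_cayley_rpow (p s : ℝ) :
    2 / (1 + s ^ 2) * (‖1 - cayley s‖ ^ p / ‖1 - cayley s‖ ^ 2) =
      4 ^ (p / 2) / 2 * (1 + ‖s‖ ^ 2) ^ (-p / 2) := by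
  have hs : 0 < 1 + s ^ 2 := by positivity
  have hrpow : ‖1 - cayley s‖ ^ p = (4 / (1 + s ^ 2)) ^ (p / 2) := by
    rw [norm_sub_rev, ← sq_norm_cayley_sub_one, ← Real.rpow_natCast_mul (norm_nonneg _)]
    congr 1
    push_cast
    ring
  rw [hrpow, norm_sub_rev, sq_norm_cayley_sub_one, Real.div_rpow (by norm_num) hs.le, neg_div,
    Real.rpow_neg (by positivity), Real.norm_eq_abs, sq_abs]
  field_simp
  norm_num

lemma lintegral_norm_one_sub_rpow_ne_top {p : ℝ} (hp : 1 < p) :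
    ∫⁻ y, ENNReal.ofReal (‖1 - y‖ ^ p / ‖1 - y‖ ^ 2) ∂circleMeasure ≠ ⊤ := by
  rw [circleMeasure_eq_map_cayley,
    lintegral_map (by fun_prop) measurableEmbedding_cayley.measurable,
    lintegral_withDensity_eq_lintegral_mul_non_measurable _ (by fun_prop) (by simp)]
  have hmul (s : ℝ) : ENNReal.ofReal (2 / (1 + s ^ 2)) *
      ENNReal.ofReal (‖1 - cayley s‖ ^ p / ‖1 - cayley s‖ ^ 2) =
      ENNReal.ofReal (4 ^ (p / 2) / 2 * (1 + ‖s‖ ^ 2) ^ (-p / 2)) := by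
    rw [← ENNReal.ofReal_mul (by positivity), weighted_norm_one_sub_cayley_rpow]
  simp only [Pi.mul_apply, hmul]
  exact (((integrable_rpow_neg_one_add_norm_sq (by simpa)).const_mul _).lintegral_lt_top).ne

lemma lintegral_norm_sub_rpow_eq (p : ℝ) {x : ℂ} (hx : x ∈ unitCircle) :
    ∫⁻ y, ENNReal.ofReal (‖x - y‖ ^ p / ‖x - y‖ ^ 2) ∂circleMeasure =
      ∫⁻ y, ENNReal.ofReal (‖1 - y‖ ^ p / ‖1 - y‖ ^ 2) ∂circleMeasure := by
  have hrot (y : ℂ) : ‖x - x * y‖ = ‖1 - y‖ := by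
    rw [← mul_one_sub, norm_mul, mem_unitCircle.1 hx, one_mul]
  conv_lhs => rw [← map_mul_left_circleMeasure hx, lintegral_map (by fun_prop) (by fun_prop)]
  simp only [hrot]

lemma gEnergy_id_ne_top {p : ℝ} (hp : 1 < p) : gEnergy p (fun z ↦ z) ≠ ⊤ := by
  rw [gEnergy, gEnergyOn, Measure.restrict_univ, lintegral_prod _ (by fun_prop),
    lintegral_congr_ae (ae_mem_unitCircle.mono fun x hx ↦ lintegral_norm_sub_rpow_eq p hx),
    lintegral_const]
  exact ENNReal.mul_ne_top (lintegral_norm_one_sub_rpow_ne_top hp) (measure_ne_top _ _)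

lemma exists_hasDegree_gagliardoENorm_ne_top {p : ℝ} (hp : 1 < p) (d : ℤ) :
    ∃ g, HasDegree g d ∧ gagliardoENorm (ENNReal.ofReal p) g ≠ ⊤ := by
  have hid := (gagliardoENorm_ofReal_ne_top_iff (zero_lt_one.trans hp)).2 (gEnergy_id_ne_top hp)
  have hmul {g h : ℂ → ℂ} {d e : ℤ} (hg : HasDegree g d) (hh : HasDegree h e)
      (hgp : gagliardoENorm (ENNReal.ofReal p) g ≠ ⊤)
      (hhp : gagliardoENorm (ENNReal.ofReal p) h ≠ ⊤) :
      gagliardoENorm (ENNReal.ofReal p) (fun z ↦ g z * h z) ≠ ⊤ :=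
    gagliardoENorm_mul_ne_top hg.aemeasurable hh.aemeasurable (ENNReal.one_le_ofReal.2 hp.le)
      (hg.ae_norm_eq_one.mono fun _ ↦ le_of_eq) (hh.ae_norm_eq_one.mono fun _ ↦ le_of_eq) hgp hhp
  induction d with
  | zero => exact ⟨_, hasDegree_const (mem_unitCircle.2 norm_one), by simp [gagliardoENorm]⟩
  | succ n ih =>
    obtain ⟨g, hg, hgp⟩ := ih
    exact ⟨_, hg.mul hasDegree_id, hmul hg hasDegree_id hgp hid⟩
  | pred n ih =>
    obtain ⟨g, hg, hgp⟩ := ih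
    exact ⟨_, hg.mul hasDegree_conj, hmul hg hasDegree_conj hgp (by rwa [gagliardoENorm_conj])⟩

/-! ### The classes `𝓔_d` -/

section ClassE

variable {p : ℝ} {d : ℤ} {f : ℂ → ℂ}

lemma gagliardoENorm_ne_top_of_mem_classE (hp : 0 < p) (hf : f ∈ classE p d) :
    gagliardoENorm (ENNReal.ofReal p) f ≠ ⊤ :=
  (gagliardoENorm_ofReal_ne_top_iff hp).2 hf.2.2.1

lemma memLp_of_ae_norm_eq_one {r : ℝ≥0∞} (hf : AEMeasurable f circleMeasure)
    (hf1 : ∀ᵐ x ∂circleMeasure, ‖f x‖ = 1) : MemLp f r circleMeasure :=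
  .of_bound hf.aestronglyMeasurable 1 (hf1.mono fun _ ↦ le_of_eq)

lemma exists_seq_of_mem_classE (hp : 1 ≤ p) (hf : f ∈ classE p d) :
    ∃ g : ℕ → ℂ → ℂ, (∀ k, HasDegree (g k) d) ∧
      (∀ k, gagliardoENorm (ENNReal.ofReal p) (g k) ≠ ⊤) ∧
      (∀ᵐ x ∂circleMeasure, Tendsto (g · x) atTop (𝓝 (f x))) ∧
      Tendsto (fun k ↦ gagliardoENorm (ENNReal.ofReal p) (fun x ↦ f x - g k x)) atTop (𝓝 0) := by
  have hp0 : 0 < p := zero_lt_one.trans_le hp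
  have hfp := gagliardoENorm_ne_top_of_mem_classE hp0 hf
  obtain ⟨hfm, hf1, -, g, hg, hgLp, hgp⟩ := hf
  have hgE (k : ℕ) := (gagliardoENorm_ofReal_ne_top_iff hp0).2 (hg k).2
  have hLp : Tendsto (fun k ↦ eLpNorm (g k - f) (ENNReal.ofReal p) circleMeasure) atTop (𝓝 0) := by
    simp only [eLpNorm_sub_comm _ f]
    exact tendsto_eLpNorm_zero_of_tendsto_integral_norm_rpow hp0 (fun k ↦
      (memLp_of_ae_norm_eq_one hfm hf1).sub
        (memLp_of_ae_norm_eq_one (hg k).1.aemeasurable (hg k).1.ae_norm_eq_one)) hgLp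
  obtain ⟨ns, hns, hlim⟩ := (tendstoInMeasure_of_tendsto_eLpNorm (by simpa)
    (fun k ↦ (hg k).1.aemeasurable.aestronglyMeasurable) hfm.aestronglyMeasurable
    hLp).exists_seq_tendsto_ae
  refine ⟨fun k ↦ g (ns k), fun k ↦ (hg _).1, fun k ↦ hgE _, hlim, ?_⟩
  have hfin (k : ℕ) : gagliardoENorm (ENNReal.ofReal p) (fun x ↦ f x - g k x) ≠ ⊤ :=
    ne_top_of_le_ne_top (ENNReal.add_ne_top.2 ⟨hfp, hgE k⟩)
      (gagliardoENorm_sub_le hfm (hg k).1.aemeasurable (ENNReal.one_le_ofReal.2 hp))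
  simp only [gSeminorm_eq_toReal hp0] at hgp
  exact ((ENNReal.tendsto_toReal_iff hfin ENNReal.zero_ne_top).1
    (by simpa using hgp)).comp hns.tendsto_atTop

lemma mem_classE_of_tendsto (hp : 1 ≤ p) {g : ℕ → ℂ → ℂ} (hg : ∀ k, HasDegree (g k) d)
    (hgp : ∀ k, gagliardoENorm (ENNReal.ofReal p) (g k) ≠ ⊤)
    (hlim : ∀ᵐ x ∂circleMeasure, Tendsto (g · x) atTop (𝓝 (f x)))
    (hlimp : Tendsto (fun k ↦ gagliardoENorm (ENNReal.ofReal p) (fun x ↦ f x - g k x)) atTop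
      (𝓝 0)) : f ∈ classE p d := by
  have hp0 : 0 < p := zero_lt_one.trans_le hp
  have hfm : AEMeasurable f circleMeasure :=
    aemeasurable_of_tendsto_metrizable_ae atTop (fun k ↦ (hg k).aemeasurable) hlim
  have hf1 : ∀ᵐ x ∂circleMeasure, ‖f x‖ = 1 := by
    filter_upwards [hlim, ae_all_iff.2 fun k ↦ (hg k).ae_norm_eq_one] with x hx hgx
    exact tendsto_nhds_unique hx.norm (by simp [hgx])
  obtain ⟨k, hk⟩ := (hlimp.eventually_lt_const ENNReal.zero_lt_top).exists
  have hfp : gagliardoENorm (ENNReal.ofReal p) f ≠ ⊤ := by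
    refine ne_top_of_le_ne_top (ENNReal.add_ne_top.2 ⟨hk.ne, hgp k⟩) ?_
    rw [add_comm, gagliardoENorm_sub_comm]
    exact gagliardoENorm_le_add_sub hfm (hg k).aemeasurable (ENNReal.one_le_ofReal.2 hp)
  refine ⟨hfm, hf1, (gagliardoENorm_ofReal_ne_top_iff hp0).1 hfp, g,
    fun k ↦ ⟨hg k, (gagliardoENorm_ofReal_ne_top_iff hp0).1 (hgp k)⟩, ?_, ?_⟩
  · refine tendsto_integral_norm_rpow_zero hp0
      (fun k ↦ (hfm.sub (hg k).aemeasurable).aestronglyMeasurable) (C := 2) (fun k ↦ ?_) ?_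
    · filter_upwards [hf1, (hg k).ae_norm_eq_one] with x hfx hgx
      exact norm_sub_le_two hfx hgx
    · filter_upwards [hlim] with x hx
      simpa using hx.const_sub (f x)
  · simp only [gSeminorm_eq_toReal hp0]
    exact (ENNReal.tendsto_toReal ENNReal.zero_ne_top).comp hlimp

lemma HasDegree.mem_classE (hp : 1 ≤ p) (hf : HasDegree f d)
    (hfp : gagliardoENorm (ENNReal.ofReal p) f ≠ ⊤) : f ∈ classE p d :=
  mem_classE_of_tendsto hp (fun _ ↦ hf) (fun _ ↦ hfp)
    (Eventually.of_forall fun _ ↦ tendsto_const_nhds) (by simp [gagliardoENorm])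

end ClassE

lemma mul_mem_classE {p : ℝ} (hp : 1 ≤ p) {d e : ℤ} {f h : ℂ → ℂ} (hf : f ∈ classE p d)
    (hh : HasDegree h e) (hhp : gagliardoENorm (ENNReal.ofReal p) h ≠ ⊤) :
    (fun z ↦ f z * h z) ∈ classE p (d + e) := by
  have hr := ENNReal.one_le_ofReal.2 hp
  obtain ⟨g, hg, hgp, hlim, hlimp⟩ := exists_seq_of_mem_classE hp hf
  have hw (k : ℕ) : AEMeasurable (fun z ↦ f z - g k z) circleMeasure :=
    hf.1.sub (hg k).aemeasurable
  have hh1 : ∀ᵐ x ∂circleMeasure, ‖h x‖ ≤ 1 := hh.ae_norm_eq_one.mono fun _ ↦ le_of_eq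
  refine mem_classE_of_tendsto hp (fun k ↦ (hg k).mul hh)
    (fun k ↦ gagliardoENorm_mul_ne_top (hg k).aemeasurable hh.aemeasurable hr
      ((hg k).ae_norm_eq_one.mono fun _ ↦ le_of_eq) hh1 (hgp k) hhp)
    (hlim.mono fun x hx ↦ hx.mul_const (h x)) ?_
  have hsnd := tendsto_eLpNorm_snd_mul_sub (l := atTop) (D := 2) ENNReal.ofReal_ne_top
    hh.aemeasurable hhp (Eventually.of_forall hw)
    (Eventually.of_forall fun k ↦ by
      filter_upwards [hf.2.1, (hg k).ae_norm_eq_one] with x hfx hgx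
      exact norm_sub_le_two hfx hgx)
    (by
      filter_upwards [hlim] with x hx
      simpa using hx.const_sub (f x))
  refine tendsto_of_tendsto_of_tendsto_of_le_of_le tendsto_const_nhds
    (by simpa using hlimp.add hsnd) (fun _ ↦ zero_le) fun k ↦ ?_
  simpa [← sub_mul, mul_comm (h _)] using gagliardoENorm_mul_le hh.aemeasurable (hw k) hr hh1

lemma ae_tendsto_comp_circleDilation {h : ℂ → ℂ} (hh : ContinuousOn h unitCircle) :
    ∀ᵐ z ∂circleMeasure, Tendsto (fun a ↦ h (circleDilation a z)) atTop (𝓝 (h 1)) := by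
  filter_upwards [ae_mem_unitCircle, circleMeasure.ae_ne (-1)] with z hz hz1
  refine (hh 1 (mem_unitCircle.2 norm_one)).tendsto.comp (tendsto_nhdsWithin_iff.2
    ⟨tendsto_circleDilation_atTop hz1, ?_⟩)
  filter_upwards [eventually_ne_atTop 0] with a ha using circleDilation_mem_unitCircle ha hz

lemma exists_gagliardoENorm_sub_mul_comp_circleDilation_lt {r : ℝ≥0∞} (hr : 1 ≤ r) (hr' : r ≠ ⊤)
    {f h : ℂ → ℂ} {e : ℤ} {c : ℝ≥0∞} (hf : AEMeasurable f circleMeasure)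
    (hf1 : ∀ᵐ x ∂circleMeasure, ‖f x‖ ≤ 1) (hfr : gagliardoENorm r f ≠ ⊤) (hh : HasDegree h e)
    (hh1 : h 1 = 1) (hhc : gagliardoENorm r h < c) :
    ∃ a : ℝ, 0 < a ∧ gagliardoENorm r (fun z ↦ f z - f z * h (circleDilation a z)) < c := by
  have hw : ∀ᶠ a in atTop, AEMeasurable (fun z ↦ 1 - h (circleDilation a z)) circleMeasure := by
    filter_upwards [eventually_gt_atTop 0] with a ha
    exact aemeasurable_const.sub (hh.comp_circleDilation ha).aemeasurable
  have hw2 : ∀ᶠ a in atTop, ∀ᵐ x ∂circleMeasure, ‖1 - h (circleDilation a x)‖ ≤ 2 := by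
    filter_upwards [eventually_gt_atTop 0] with a ha
    filter_upwards [(hh.comp_circleDilation ha).ae_norm_eq_one] with x hx
    exact norm_sub_le_two norm_one hx
  have hlim : ∀ᵐ x ∂circleMeasure, Tendsto (fun a ↦ 1 - h (circleDilation a x)) atTop (𝓝 0) := by
    filter_upwards [ae_tendsto_comp_circleDilation hh.1] with x hx
    simpa [hh1] using hx.const_sub 1
  have hsnd := tendsto_eLpNorm_snd_mul_sub hr' hf hfr hw hw2 hlim
  have hlt := (hsnd.const_add (gagliardoENorm r h)).eventually_lt_const (by simpa)
  obtain ⟨a, hac, ha, hwa⟩ := (hlt.and ((eventually_gt_atTop 0).and hw)).exists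
  refine ⟨a, ha, lt_of_le_of_lt ?_ hac⟩
  simpa [mul_one_sub, gagliardoENorm_const_sub,
    gagliardoENorm_comp_circleDilation hh.aemeasurable ha.ne']
    using gagliardoENorm_mul_le hf hwa hr hf1

lemma sigmaP_nonneg (p : ℝ) (d : ℤ) : 0 ≤ sigmaP p d := by
  refine Real.sInf_nonneg ?_
  rintro _ ⟨f, -, rfl⟩
  exact gSeminorm_nonneg p f

lemma exists_hasDegree_gagliardoENorm_lt {p : ℝ} (hp : 1 < p) {d : ℤ} {c : ℝ}
    (hc : sigmaP p d < c) :
    ∃ h, HasDegree h d ∧ h 1 = 1 ∧ gagliardoENorm (ENNReal.ofReal p) h < ENNReal.ofReal c := by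
  have hp0 : 0 < p := zero_lt_one.trans hp
  obtain ⟨g₀, hg₀, hg₀p⟩ := exists_hasDegree_gagliardoENorm_ne_top hp d
  obtain ⟨_, ⟨f, hf, rfl⟩, hfc⟩ := exists_lt_of_csInf_lt
    (Set.Nonempty.image _ ⟨g₀, hg₀.mem_classE hp.le hg₀p⟩) hc
  rw [gSeminorm_lt_iff hp0 (gagliardoENorm_ne_top_of_mem_classE hp0 hf)] at hfc
  obtain ⟨g, hg, -, -, hlim⟩ := exists_seq_of_mem_classE hp.le hf
  obtain ⟨k, hk⟩ := ((hlim.const_add _).eventually_lt_const (by simpa)).exists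
  have hgc := (gagliardoENorm_le_add_sub (hg k).aemeasurable hf.1
    (ENNReal.one_le_ofReal.2 hp.le)).trans_lt hk
  have hg1 : g k 1 ∈ unitCircle := (hg k).2.1 1 (mem_unitCircle.2 norm_one)
  have hinv : (g k 1)⁻¹ ∈ unitCircle := by
    rw [mem_unitCircle, norm_inv, mem_unitCircle.1 hg1, inv_one]
  refine ⟨fun z ↦ g k z * (g k 1)⁻¹, by simpa using (hg k).mul (hasDegree_const hinv),
    mul_inv_cancel₀ (norm_ne_zero_iff.1 (by simp [mem_unitCircle.1 hg1])), ?_⟩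
  rwa [gagliardoENorm_mul_const _ hinv]

lemma exists_mem_classE_gSeminorm_sub_lt {p : ℝ} (hp : 1 < p) {d₁ d₂ : ℤ} {f : ℂ → ℂ}
    (hf : f ∈ classE p d₁) {c : ℝ} (hc : sigmaP p (d₂ - d₁) < c) :
    ∃ g ∈ classE p d₂, gSeminorm p (fun z ↦ f z - g z) < c := by
  have hp0 : 0 < p := zero_lt_one.trans hp
  have hr : 1 ≤ ENNReal.ofReal p := ENNReal.one_le_ofReal.2 hp.le
  obtain ⟨h, hh, hh1, hhc⟩ := exists_hasDegree_gagliardoENorm_lt hp hc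
  obtain ⟨a, ha, hac⟩ := exists_gagliardoENorm_sub_mul_comp_circleDilation_lt hr
    ENNReal.ofReal_ne_top hf.1 (hf.2.1.mono fun _ ↦ le_of_eq)
    (gagliardoENorm_ne_top_of_mem_classE hp0 hf) hh hh1 hhc
  refine ⟨fun z ↦ f z * h (circleDilation a z), ?_, ?_⟩
  · have hinv := gagliardoENorm_comp_circleDilation (r := ENNReal.ofReal p) hh.aemeasurable ha.ne'
    simpa using mul_mem_classE hp.le hf (hh.comp_circleDilation ha) (hinv ▸ hhc.ne_top)
  · exact (gSeminorm_lt_iff hp0 hac.ne_top).2 hac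

/-- **Upper bound.** `Dist_{W^{1/p,p}}(𝓔_{d₁}, 𝓔_{d₂}) ≤ σ_p(d₂ - d₁)`; more precisely,
for every `f ∈ 𝓔_{d₁}` and every `ε > 0` there is `g ∈ 𝓔_{d₂}` with
`|f - g|_{W^{1/p,p}}^p ≤ σ_p^p(d₂ - d₁) + ε`. -/
theorem dist_classes_le_sigma (p : ℝ) (hp : 1 < p) (d1 d2 : ℤ) :
    DistW p d1 d2 ≤ sigmaP p (d2 - d1) ∧
    ∀ f ∈ classE p d1, ∀ ε > (0 : ℝ), ∃ g ∈ classE p d2,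
      gSeminorm p (fun x => f x - g x) ^ p ≤ sigmaP p (d2 - d1) ^ p + ε := by
  have hp0 : 0 < p := zero_lt_one.trans hp
  have hσ := sigmaP_nonneg p (d2 - d1)
  constructor
  · refine Real.sSup_le ?_ hσ
    rintro _ ⟨f, hf, rfl⟩
    refine le_of_forall_gt_imp_ge_of_dense fun c hc ↦ ?_
    obtain ⟨g, hg, hgc⟩ := exists_mem_classE_gSeminorm_sub_lt hp hf hc
    refine csInf_le_of_le ⟨0, ?_⟩ ⟨g, hg, rfl⟩ hgc.le
    rintro _ ⟨g, -, rfl⟩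
    exact gSeminorm_nonneg p _
  · intro f hf ε hε
    have hc : sigmaP p (d2 - d1) < (sigmaP p (d2 - d1) ^ p + ε) ^ p⁻¹ :=
      (Real.lt_rpow_inv_iff_of_pos hσ (by positivity) hp0).2 (lt_add_of_pos_right _ hε)
    obtain ⟨g, hg, hgc⟩ := exists_mem_classE_gSeminorm_sub_lt hp hf hc
    exact ⟨g, hg, (Real.le_rpow_inv_iff_of_pos (gSeminorm_nonneg p _) (by positivity) hp0).1 hgc.le⟩
end

section
/- Let ε ∈ (0, π/2) and let z1, z2, w1, w2 ∈ S^1 be such that either both products z1·conjugate(w1) and z2·conjugate(w2) lie in the open arc A(ε, π−ε), or both lie in the open arc A(π+ε, 2π−ε). Then |(z1 − w1) − (z2 − w2)|^2 ≥ (sin^2 ε)·max{|z1 − z2|^2, |w1 − w2|^2}. -/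
/-- The open arc `A(a,b) = {e^{iθ} : θ ∈ (a,b)}` of the unit circle. -/
def arcIoo (a b : ℝ) : Set ℂ :=
  (fun θ : ℝ => Complex.exp (θ * Complex.I)) '' Set.Ioo a b

/-!
The chord from `e^{iβ}` to `e^{iα}` is a real multiple of `i e^{i(α + β)/2}`. If `z1 = e^{is} w1`
and `z2 = e^{it} w2`, the lines spanned by the chords `z1 - z2` and `w1 - w2` therefore meet at the
angle `(s + t)/2`. The norm of a difference of two vectors is at least the distance from either of
them to the line spanned by the other, which brings in the factor `|sin ((s + t)/2)| ≥ sin ε`.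
-/

open Complex (I exp)
open scoped Real

lemma exp_mul_I_sub_exp_mul_I (α β : ℝ) :
    exp (α * I) - exp (β * I) =
      ((2 * Real.sin ((α - β) / 2) : ℝ) : ℂ) * exp (((α + β) / 2 : ℝ) * I) * I := by
  have hα : (α : ℂ) * I = (α + β) / 2 * I + (α - β) / 2 * I := by ring
  have hβ : (β : ℂ) * I = (α + β) / 2 * I + -((α - β) / 2) * I := by ring
  push_cast
  rw [hα, hβ, Complex.exp_add, Complex.exp_add, Complex.two_sin]
  linear_combination
    exp ((α + β) / 2 * I) * (exp ((α - β) / 2 * I) - exp (-((α - β) / 2) * I)) * Complex.I_mul_I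

lemma norm_exp_mul_I_sub_exp_mul_I (α β : ℝ) :
    ‖exp (α * I) - exp (β * I)‖ = |2 * Real.sin ((α - β) / 2)| := by
  rw [exp_mul_I_sub_exp_mul_I, norm_mul, norm_mul, Complex.norm_I, Complex.norm_exp_ofReal_mul_I,
    mul_one, mul_one, Complex.norm_real, Real.norm_eq_abs]

lemma abs_sin_sub_mul_abs_left_le_norm_sub (p q α β : ℝ) :
    |Real.sin (α - β)| * |p| ≤ ‖p * exp (α * I) - q * exp (β * I)‖ := by
  have rotate : (p * exp (α * I) - q * exp (β * I)) * exp ((-β : ℝ) * I) =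
      p * exp ((α - β : ℝ) * I) - q := by
    rw [sub_mul, mul_assoc, mul_assoc, ← Complex.exp_add, ← Complex.exp_add, ← add_mul, ← add_mul,
      ← Complex.ofReal_add, ← Complex.ofReal_add, add_neg_cancel, ← sub_eq_add_neg,
      Complex.ofReal_zero, zero_mul, Complex.exp_zero, mul_one]
  calc |Real.sin (α - β)| * |p|
      = |(p * exp ((α - β : ℝ) * I) - q).im| := by
        rw [Complex.sub_im, Complex.im_ofReal_mul, Complex.exp_ofReal_mul_I_im, Complex.ofReal_im,
          sub_zero, abs_mul, mul_comm]
    _ ≤ ‖p * exp ((α - β : ℝ) * I) - q‖ := Complex.abs_im_le_norm _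
    _ = ‖p * exp (α * I) - q * exp (β * I)‖ := by
        rw [← rotate, norm_mul, Complex.norm_exp_ofReal_mul_I, mul_one]

lemma abs_sin_sub_mul_max_abs_le_norm_sub (p q α β : ℝ) :
    |Real.sin (α - β)| * max |p| |q| ≤ ‖p * exp (α * I) - q * exp (β * I)‖ := by
  rw [mul_max_of_nonneg _ _ (abs_nonneg _)]
  refine max_le (abs_sin_sub_mul_abs_left_le_norm_sub p q α β) ?_
  rw [← neg_sub β α, Real.sin_neg, abs_neg, norm_sub_rev]
  exact abs_sin_sub_mul_abs_left_le_norm_sub q p β α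

lemma abs_sin_mul_max_norm_sub_le {w₁ w₂ : ℂ} (hw₁ : ‖w₁‖ = 1) (hw₂ : ‖w₂‖ = 1) (s t : ℝ) :
    |Real.sin ((s + t) / 2)| * max ‖exp (s * I) * w₁ - exp (t * I) * w₂‖ ‖w₁ - w₂‖ ≤
      ‖(exp (s * I) * w₁ - w₁) - (exp (t * I) * w₂ - w₂)‖ := by
  obtain ⟨α, rfl⟩ := (Complex.norm_eq_one_iff w₁).mp hw₁
  obtain ⟨β, rfl⟩ := (Complex.norm_eq_one_iff w₂).mp hw₂
  have exp_mul_exp (x y : ℝ) : exp (x * I) * exp (y * I) = exp ((x + y : ℝ) * I) := by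
    rw [← Complex.exp_add, ← add_mul, Complex.ofReal_add]
  have angle_between_chords : (s + t) / 2 = (s + α + (t + β)) / 2 - (α + β) / 2 := by ring
  rw [exp_mul_exp, exp_mul_exp, sub_sub_sub_comm, norm_exp_mul_I_sub_exp_mul_I,
    norm_exp_mul_I_sub_exp_mul_I, exp_mul_I_sub_exp_mul_I, exp_mul_I_sub_exp_mul_I, ← sub_mul,
    norm_mul, Complex.norm_I, mul_one, angle_between_chords]
  exact abs_sin_sub_mul_max_abs_le_norm_sub _ _ _ _

lemma sin_le_sin_of_mem_Icc_pi_sub {x y : ℝ} (hx : -(π / 2) ≤ x) (hy : y ∈ Set.Icc x (π - x)) :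
    Real.sin x ≤ Real.sin y := by
  rw [← Real.cos_pi_div_two_sub, ← Real.cos_pi_div_two_sub, ← Real.cos_abs (π / 2 - y)]
  exact Real.cos_le_cos_of_nonneg_of_le_pi (abs_nonneg _) (by linarith)
    (abs_le.mpr ⟨by linarith [hy.2], by linarith [hy.1]⟩)

lemma sin_le_abs_sin_of_mem_Icc_or_mem_Icc {x y : ℝ} (hx : -(π / 2) ≤ x)
    (hy : y ∈ Set.Icc x (π - x) ∨ y ∈ Set.Icc (π + x) (2 * π - x)) :
    Real.sin x ≤ |Real.sin y| := by
  rcases hy with hy | ⟨hy_lower, hy_upper⟩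
  · exact (sin_le_sin_of_mem_Icc_pi_sub hx hy).trans (le_abs_self _)
  · rw [← abs_neg, ← Real.sin_sub_pi]
    exact (sin_le_sin_of_mem_Icc_pi_sub hx ⟨by linarith, by linarith⟩).trans (le_abs_self _)

lemma eq_mul_of_eq_mul_conj {u z w : ℂ} (hw : ‖w‖ = 1) (h : u = z * (starRingEnd ℂ) w) :
    z = u * w := by
  rw [h, mul_assoc, Complex.conj_mul', hw, Complex.ofReal_one, one_pow, mul_one]

/-- **Lemma 2.2.** Let `ε ∈ (0, π/2)` and let `z₁, z₂, w₁, w₂ ∈ S¹` be such that either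
both `z₁·conj w₁` and `z₂·conj w₂` lie in `A(ε, π-ε)`, or both lie in `A(π+ε, 2π-ε)`.
Then `|(z₁ - w₁) - (z₂ - w₂)|² ≥ sin²ε · max{|z₁ - z₂|², |w₁ - w₂|²}`. -/
theorem chord_lemma (ε : ℝ) (hε : ε ∈ Set.Ioo 0 (Real.pi / 2))
    (z1 z2 w1 w2 : ℂ)
    (hz1 : ‖z1‖ = 1) (hz2 : ‖z2‖ = 1) (hw1 : ‖w1‖ = 1) (hw2 : ‖w2‖ = 1)
    (h : (z1 * (starRingEnd ℂ) w1 ∈ arcIoo ε (Real.pi - ε) ∧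
          z2 * (starRingEnd ℂ) w2 ∈ arcIoo ε (Real.pi - ε)) ∨
         (z1 * (starRingEnd ℂ) w1 ∈ arcIoo (Real.pi + ε) (2 * Real.pi - ε) ∧
          z2 * (starRingEnd ℂ) w2 ∈ arcIoo (Real.pi + ε) (2 * Real.pi - ε))) :
    Real.sin ε ^ 2 * max (‖z1 - z2‖ ^ 2) (‖w1 - w2‖ ^ 2) ≤
      ‖(z1 - w1) - (z2 - w2)‖ ^ 2 := by
  obtain ⟨s, t, hs, ht, hst⟩ : ∃ s t : ℝ, exp (s * I) = z1 * (starRingEnd ℂ) w1 ∧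
      exp (t * I) = z2 * (starRingEnd ℂ) w2 ∧ Real.sin ε ≤ |Real.sin ((s + t) / 2)| := by
    rcases h with ⟨⟨s, ⟨_, _⟩, hs⟩, ⟨t, ⟨_, _⟩, ht⟩⟩ | ⟨⟨s, ⟨_, _⟩, hs⟩, ⟨t, ⟨_, _⟩, ht⟩⟩ <;>
      refine ⟨s, t, hs, ht, sin_le_abs_sin_of_mem_Icc_or_mem_Icc (by linarith [hε.1]) ?_⟩
    · exact .inl ⟨by linarith, by linarith⟩
    · exact .inr ⟨by linarith, by linarith⟩
  have sin_nonneg : 0 ≤ Real.sin ε :=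
    Real.sin_nonneg_of_nonneg_of_le_pi hε.1.le (by linarith [hε.1, hε.2])
  have chord_bound : Real.sin ε * max ‖z1 - z2‖ ‖w1 - w2‖ ≤ ‖(z1 - w1) - (z2 - w2)‖ := by
    rw [eq_mul_of_eq_mul_conj hw1 hs, eq_mul_of_eq_mul_conj hw2 ht]
    exact (mul_le_mul_of_nonneg_right hst (le_max_of_le_left (norm_nonneg _))).trans
      (abs_sin_mul_max_norm_sub_le hw1 hw2 s t)
  rw [← pow_left_monotoneOn.map_max (norm_nonneg _) (norm_nonneg _), ← mul_pow]
  gcongr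
end
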